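/- Let a : ℝ → ℝ be a C^∞, 2π-periodic, strictly positive function normalized so that ∫₀^{2π} a(θ)^{−1}dθ = 2π. Then Z_{k+1}(a) ≥ Z_k(a) for every integer k ≥ 1. -/

import Mathlib

open MeasureTheory Real

noncomputable section

/-- The `k`-th Fourier coefficient of a `2π`-periodic function `u : ℝ → ℂ`:
`û(k) = (1/2π) ∫₀^{2π} u(θ) e^{-ikθ} dθ`. -/
def fCoef (u : ℝ → ℂ) (k : ℤ) : ℂ :=
  (2 * Real.pi)⁻¹ * ∫ θ in (0:ℝ)..(2 * Real.pi), u θ * Complex.exp (-Complex.I * k * θ)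

/-- `prodPoly m j n = n(n+j₁)(n+j₁+j₂)⋯(n+j₁+⋯+j_{m-1})`. -/
def prodPoly (m : ℕ) (j : Fin m → ℤ) (n : ℤ) : ℤ :=
  ∏ i : Fin m, (n + ∑ l ∈ Finset.Iio i, j l)

/-- The coefficient `N_{j₁…j_m} = ∑ₙ (|n(n+j₁)⋯(n+j₁+⋯+j_{m-1})| - n(n+j₁)⋯(n+j₁+⋯+j_{m-1}))`;
only finitely many summands are nonzero. -/
def Ncoef (m : ℕ) (j : Fin m → ℤ) : ℝ :=
  ∑' n : ℤ, ((|prodPoly m j n| - prodPoly m j n : ℤ) : ℝ)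

/-- A term of the series defining the zeta-invariant `Z_k(a)`:
`N_{j₁…j_{2k}} â(j₁)⋯â(j_{2k})` for `j₁+⋯+j_{2k} = 0`. -/
def zetaTerm (k : ℕ) (a : ℝ → ℝ) (j : {j : Fin (2 * k) → ℤ // ∑ i, j i = 0}) : ℂ :=
  (Ncoef (2 * k) j.val : ℂ) * ∏ i, fCoef (fun θ => (a θ : ℂ)) (j.val i)

/-- The zeta-invariant `Z_k(a) = ∑_{j₁+⋯+j_{2k}=0} N_{j₁…j_{2k}} â(j₁)⋯â(j_{2k})`. -/
def ZetaInv (k : ℕ) (a : ℝ → ℝ) : ℂ :=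
  ∑' j : {j : Fin (2 * k) → ℤ // ∑ i, j i = 0}, zetaTerm k a j

/-!
Let `s = ∫₀^θ a⁻¹`, let `vₙ` and `uₙ` be the sequences of Fourier coefficients of `e^{ins}` and of
`a⁻¹ e^{ins}` as functions of `θ`, and put `T = (â(p - q))`, `D = diag(n)`, `L = |D|`. Then
`T uₙ = vₙ`, `D vₙ = n uₙ` and `⟪vₙ, uₙ⟫ = 1`, while Parseval's identity in the variable `s` reads
`T = ∑ₙ vₙ vₙ*`. Viewing `n, n + j₁, n + j₁ + j₂, …` as a closed path exhibits `Z_k(a)` as the trace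
of `(T L)^{2k} - (T D)^{2k}`, which the decomposition of `T` turns into
`∑ₙ (⟪vₙ, L (T L)^{2k-1} vₙ⟫ - n^{2k})`.

Here `⟪vₙ, L (T L)^{i-1} vₙ⟫ = μᵢ`, the `i`-th moment of the positive operator `T^{1/2} L T^{1/2}`
at the unit vector `T^{1/2} uₙ`. For `n ≠ 0` we have `μ₁ = ⟪vₙ, L vₙ⟫ ≥ |⟪vₙ, D vₙ⟫| = |n| ≥ 1`, and
the inequalities `μᵢ₊₂ - 2 |n| μᵢ₊₁ + n² μᵢ ≥ 0`, which express positivity, propagate this to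
`μᵢ₊₂ - μᵢ ≥ |n|^{i+2} - |n|^i`. For `n = 0` and `i ≥ 1` both differences vanish.
-/

section Moments

open scoped InnerProductSpace

lemma pow_sub_pow_le_of_second_difference_nonneg {N : ℝ} (hN : 1 ≤ N) {μ : ℕ → ℝ}
    (h₀ : μ 0 = 1) (h₁ : N ≤ μ 1)
    (hμ : ∀ i, 0 ≤ μ (i + 2) - 2 * N * μ (i + 1) + N ^ 2 * μ i) (m : ℕ) :
    N ^ (m + 2) - N ^ m ≤ μ (m + 2) - μ m := by
  have ratio : ∀ i, N * μ i ≤ μ (i + 1) := fun i => by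
    induction i with
    | zero => simpa [h₀] using h₁
    | succ i ih => nlinarith [hμ i]
  have lower : ∀ i, N ^ i ≤ μ i := fun i => by
    induction i with
    | zero => simp [h₀]
    | succ i ih => rw [pow_succ]; nlinarith [ratio i]
  calc N ^ (m + 2) - N ^ m = (N ^ 2 - 1) * N ^ m := by ring
    _ ≤ (N ^ 2 - 1) * μ m := mul_le_mul_of_nonneg_left (lower m) (by nlinarith)
    _ ≤ μ (m + 2) - μ m := by nlinarith [ratio m, ratio (m + 1)]

variable {𝕜 E : Type*} [RCLike 𝕜] [NormedAddCommGroup E] [InnerProductSpace 𝕜 E]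

lemma isPositive_mul_mul {S T : E →ₗ[𝕜] E} (hS : S.IsSymmetric) (hT : T.IsPositive) :
    (S * T * S).IsPositive :=
  ⟨fun x y => by simp only [Module.End.mul_apply, hS _ _, hT.isSymmetric _ _],
    fun x => by simpa only [Module.End.mul_apply, hS _ x] using hT.re_inner_nonneg_left (S x)⟩

variable {C L : E →ₗ[𝕜] E}

lemma isPositive_pow_mul (hC : C.IsPositive) (hL : L.IsPositive) :
    ∀ i : ℕ, ((C * L) ^ i * C).IsPositive
  | 0 => by simpa using hC
  | 1 => by simpa using isPositive_mul_mul hC.isSymmetric hL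
  | i + 2 => by
    have h := isPositive_mul_mul hC.isSymmetric
      (isPositive_mul_mul hL.isSymmetric (isPositive_pow_mul hC hL i))
    convert h using 1
    rw [pow_succ, pow_succ']
    simp only [mul_assoc]

/-- The `i`-th moment of the formal operator `C^{1/2} L C^{1/2}` at the vector `C^{1/2} u`. -/
def moment (C L : E →ₗ[𝕜] E) (u : E) (i : ℕ) : ℝ :=
  RCLike.re (inner 𝕜 u (((C * L) ^ i * C) u))

lemma moment_succ_of_apply_eq_zero {u : E} (hu : L (C u) = 0) (i : ℕ) :
    moment C L u (i + 1) = 0 := by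
  rw [moment, pow_succ]
  simp [hu]

lemma moment_second_difference_nonneg (hC : C.IsPositive) (hL : L.IsPositive) (u : E) (c : ℝ)
    (i : ℕ) :
    0 ≤ moment C L u (i + 2) - 2 * c * moment C L u (i + 1) + c ^ 2 * moment C L u i := by
  have h := (isPositive_pow_mul hC hL i).re_inner_nonneg_right ((L * C) u - (c : 𝕜) • u)
  have comm : (C * L) ^ i * C * (L * C) = (C * L) ^ (i + 1) * C := by
    rw [pow_succ]; simp only [mul_assoc]
  have adjoint : ∀ y, inner 𝕜 ((L * C) u) y = inner 𝕜 u ((C * L) y) := fun y => by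
    simp only [Module.End.mul_apply, hL.isSymmetric _ _, hC.isSymmetric _ _]
  have mul_power : ∀ j, (C * L) * ((C * L) ^ j * C) = (C * L) ^ (j + 1) * C := fun j => by
    rw [pow_succ', mul_assoc _ ((C * L) ^ j)]
  simp only [map_sub, map_smul, inner_sub_left, inner_sub_right, inner_smul_left, inner_smul_right,
    adjoint, RCLike.conj_ofReal, RCLike.re_ofReal_mul, ← Module.End.mul_apply, comm, mul_power] at h
  unfold moment
  linarith

theorem pow_sub_pow_le_moment_sub_moment (hC : C.IsPositive) (hL : L.IsPositive) {u : E} {N : ℝ}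
    (hN : 1 ≤ N) (h₀ : moment C L u 0 = 1) (h₁ : N ≤ moment C L u 1) (m : ℕ) :
    N ^ (m + 2) - N ^ m ≤ moment C L u (m + 2) - moment C L u m :=
  pow_sub_pow_le_of_second_difference_nonneg hN h₀ h₁
    (moment_second_difference_nonneg hC hL u N) m

end Moments

section RapidDecay

/-- The weight on `ℤ` against which the decay of sequences is measured: it is submultiplicative,
hence compatible with convolution. -/
abbrev weight (n : ℤ) : ℝ := 1 + |(n : ℝ)|

lemma one_le_weight (n : ℤ) : 1 ≤ weight n := by simp [weight]

lemma weight_neg (n : ℤ) : weight (-n) = weight n := by simp [weight]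

lemma weight_add_le (m n : ℤ) : weight (m + n) ≤ weight m * weight n := by
  have := abs_add_le (m : ℝ) n
  push_cast [weight]
  nlinarith [mul_nonneg (abs_nonneg (m : ℝ)) (abs_nonneg (n : ℝ))]

lemma summable_inv_weight_sq : Summable fun n : ℤ => (weight n ^ 2)⁻¹ := by
  have h : Summable fun n : ℕ => (weight n ^ 2)⁻¹ := by
    simpa [weight, add_comm] using
      (summable_nat_add_iff 1).2 (Real.summable_nat_pow_inv.2 one_lt_two)
  exact .of_nat_of_neg h (by simpa only [weight_neg] using h)

/-- Sequences on `ℤ` decaying faster than every power: the Fourier side of smooth periodic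
functions. -/
def RapidDecay (x : ℤ → ℂ) : Prop :=
  ∀ N : ℕ, Summable fun n => weight n ^ N * ‖x n‖

namespace RapidDecay

variable {x y : ℤ → ℂ}

lemma of_bound (h : ∀ N : ℕ, ∃ M, ∀ n, weight n ^ N * ‖x n‖ ≤ M) : RapidDecay x := fun N => by
  obtain ⟨M, hM⟩ := h (N + 2)
  refine (summable_inv_weight_sq.mul_left M).of_nonneg_of_le (fun n => by positivity) fun n => ?_
  rw [← div_eq_mul_inv, le_div_iff₀ (by positivity)]
  exact (by ring : _ = weight n ^ (N + 2) * ‖x n‖).trans_le (hM n)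

lemma summable_norm (hx : RapidDecay x) : Summable fun n => ‖x n‖ := by
  simpa using hx 0

lemma summable_mul_comp {X : Type*} (hx : RapidDecay x) {f : X → ℂ}
    (hf : Summable fun z => ‖f z‖) (p : X → ℤ) : Summable fun z => f z * x (p z) :=
  (hf.mul_right (∑' n, ‖x n‖)).of_norm_bounded fun z => by
    rw [norm_mul]
    gcongr
    exact hx.summable_norm.le_tsum _ fun _ _ => norm_nonneg _

protected lemma memℓp (hx : RapidDecay x) : Memℓp x 2 :=
  (memℓp_gen (p := 1) (by simpa using hx.summable_norm)).of_exponent_ge (by norm_num)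

protected lemma zero : RapidDecay 0 := fun N => by simp [summable_zero]

protected lemma add (hx : RapidDecay x) (hy : RapidDecay y) : RapidDecay (x + y) := fun N =>
  ((hx N).add (hy N)).of_nonneg_of_le (fun n => by positivity) fun n => by
    rw [← mul_add]
    exact mul_le_mul_of_nonneg_left (norm_add_le _ _) (by positivity)

protected lemma smul (c : ℂ) (hx : RapidDecay x) : RapidDecay (c • x) := fun N =>
  ((hx N).mul_left ‖c‖).congr fun n => by simp [mul_left_comm]

lemma mul_of_le_weight {c : ℤ → ℂ} (hc : ∀ n, ‖c n‖ ≤ weight n) (hx : RapidDecay x) :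
    RapidDecay (c * x) := fun N =>
  (hx (N + 1)).of_nonneg_of_le (fun n => by positivity) fun n => by
    rw [Pi.mul_apply, norm_mul, pow_succ, mul_assoc]
    gcongr
    exact hc n

end RapidDecay

lemma summable_sub_mul {f g : ℤ → ℝ} (hf : Summable f) (hg : Summable g) (hf₀ : 0 ≤ f)
    (hg₀ : 0 ≤ g) : Summable fun p : ℤ × ℤ => f (p.1 - p.2) * g p.2 := by
  let e : ℤ × ℤ ≃ ℤ × ℤ :=
    { toFun := fun p => (p.1 - p.2, p.2)
      invFun := fun p => (p.1 + p.2, p.2)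
      left_inv := fun p => by simp
      right_inv := fun p => by simp }
  exact e.summable_iff.2 (hf.mul_of_nonneg hg hf₀ hg₀)

/-- The convolution `α * x` of two sequences on `ℤ`, that is, the product of the Toeplitz matrix
`(α (i - j))` with the vector `x`. -/
def discreteConv (α x : ℤ → ℂ) (n : ℤ) : ℂ :=
  ∑' k, α (n - k) * x k

namespace RapidDecay

variable {α x y : ℤ → ℂ}

lemma summable_weight_mul_discreteConv (hα : RapidDecay α) (hx : RapidDecay x) (N : ℕ) :
    Summable fun p : ℤ × ℤ => weight p.1 ^ N * ‖α (p.1 - p.2) * x p.2‖ := by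
  refine (summable_sub_mul (hα N) (hx N) (fun n => by positivity)
    fun n => by positivity).of_nonneg_of_le (fun p => by positivity) fun p => ?_
  calc weight p.1 ^ N * ‖α (p.1 - p.2) * x p.2‖
      ≤ (weight (p.1 - p.2) * weight p.2) ^ N * ‖α (p.1 - p.2) * x p.2‖ := by
        gcongr
        simpa using weight_add_le (p.1 - p.2) p.2
    _ = weight (p.1 - p.2) ^ N * ‖α (p.1 - p.2)‖ * (weight p.2 ^ N * ‖x p.2‖) := by
        rw [norm_mul, mul_pow]; ring

lemma summable_discreteConv (hα : RapidDecay α) (hx : RapidDecay x) (n : ℤ) :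
    Summable fun k => α (n - k) * x k :=
  .of_norm <| by simpa using (hα.summable_weight_mul_discreteConv hx 0).prod_factor n

protected lemma discreteConv (hα : RapidDecay α) (hx : RapidDecay x) :
    RapidDecay (discreteConv α x) := fun N =>
  (hα.summable_weight_mul_discreteConv hx N).prod.of_nonneg_of_le (fun n => by positivity)
    fun n => by
      dsimp only
      rw [tsum_mul_left]
      exact mul_le_mul_of_nonneg_left
        (norm_tsum_le_tsum_norm (hα.summable_discreteConv hx n).norm) (by positivity)

end RapidDecay

end RapidDecay

section Paths

/-- The product `h (x₁ - x₀) ⋯ h (xₘ - xₘ₋₁)` over the steps of the path `x₀, …, xₘ`. -/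
def pathProd {R : Type*} [CommMonoid R] (h : ℤ → R) {m : ℕ} (x : Fin (m + 1) → ℤ) : R :=
  ∏ i : Fin m, h (x i.succ - x i.castSucc)

lemma pathProd_cons {R : Type*} [CommMonoid R] (h : ℤ → R) {m : ℕ} (p : ℤ)
    (x : Fin (m + 1) → ℤ) :
    pathProd h (Fin.cons p x : Fin (m + 2) → ℤ) = h (x 0 - p) * pathProd h x := by
  simp [pathProd, Fin.prod_univ_succ]

lemma pathProd_nonneg {h : ℤ → ℝ} (hh : 0 ≤ h) {m : ℕ} (x : Fin (m + 1) → ℤ) :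
    0 ≤ pathProd h x :=
  Finset.prod_nonneg fun _ _ => hh _

/-- A path is determined by its starting point and its steps. -/
def pathEquiv (m : ℕ) : ℤ × (Fin m → ℤ) ≃ (Fin (m + 1) → ℤ) where
  toFun p i := p.1 + Fin.partialSum p.2 i
  invFun x := (x 0, fun i => x i.succ - x i.castSucc)
  left_inv p := by simp [Fin.partialSum_succ]
  right_inv x := by
    simpa [neg_add_eq_sub, funext_iff] using congrFun (Fin.partialSum_left_neg x)

lemma summable_prod {h : ℤ → ℝ} (hh : Summable h) (hh₀ : 0 ≤ h) :
    ∀ m : ℕ, Summable fun d : Fin m → ℤ => ∏ i, h (d i)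
  | 0 => .of_finite
  | m + 1 => by
    rw [← (Fin.consEquiv fun _ => ℤ).summable_iff]
    simpa [Function.comp_def, Fin.consEquiv, Fin.prod_univ_succ] using
      hh.mul_of_nonneg (summable_prod hh hh₀ m) hh₀ fun d => Finset.prod_nonneg fun i _ => hh₀ _

lemma summable_mul_pathProd_of_nonneg {g h : ℤ → ℝ} (hg : Summable g) (hh : Summable h)
    (hg₀ : 0 ≤ g) (hh₀ : 0 ≤ h) (m : ℕ) :
    Summable fun x : Fin (m + 1) → ℤ => g (x 0) * pathProd h x := by
  rw [← (pathEquiv m).summable_iff]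
  simpa [Function.comp_def, pathProd, pathEquiv, Fin.partialSum_succ] using
    hg.mul_of_nonneg (summable_prod hh hh₀ m) hg₀ fun d => Finset.prod_nonneg fun i _ => hh₀ _

lemma RapidDecay.summable_mul_pathProd {α : ℤ → ℂ} (hα : RapidDecay α) {m : ℕ}
    {f : (Fin (m + 1) → ℤ) → ℂ} {g : ℤ → ℝ} (hg : Summable g) (hg₀ : 0 ≤ g) (N : ℕ)
    (hf : ∀ x, ‖f x‖ ≤ g (x 0) * pathProd weight x ^ N) :
    Summable fun x => ‖f x * pathProd α x‖ := by
  refine (summable_mul_pathProd_of_nonneg hg (hα N) hg₀ (fun n => by positivity) m).of_nonneg_of_le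
    (fun x => norm_nonneg _) fun x => ?_
  calc ‖f x * pathProd α x‖ ≤ g (x 0) * pathProd weight x ^ N * ‖pathProd α x‖ := by
        rw [norm_mul]; gcongr; exact hf x
    _ = g (x 0) * pathProd (fun n => weight n ^ N * ‖α n‖) x := by
        simp only [pathProd, norm_prod, Finset.prod_mul_distrib, Finset.prod_pow, mul_assoc]

lemma weight_sub_le_pathProd {m : ℕ} (x : Fin (m + 1) → ℤ) (i j : Fin (m + 1)) :
    weight (x i - x j) ≤ pathProd weight x := by
  induction m with
  | zero => simp [Subsingleton.elim (α := Fin 1) i j, pathProd, weight]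
  | succ m ih =>
    induction x using Fin.consCases with | cons p x => ?_
    have base : ∀ k, weight (x k - p) ≤ weight (x 0 - p) * pathProd weight x := fun k => by
      have := weight_add_le (x 0 - p) (x k - x 0)
      rw [add_comm, sub_add_sub_cancel] at this
      exact this.trans (by gcongr; exact ih x k 0)
    rw [pathProd_cons]
    have one_le : 1 ≤ weight (x 0 - p) := one_le_weight _
    have one_le' : 1 ≤ pathProd weight x := by simpa [weight] using ih x 0 0
    cases i using Fin.cases with
    | zero =>
      cases j using Fin.cases with
      | zero => simpa [weight] using one_le_mul_of_one_le_of_one_le one_le one_le'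
      | succ j => simpa [← weight_neg (p - x j)] using base j
    | succ i =>
      cases j using Fin.cases with
      | zero => simpa using base i
      | succ j =>
        simpa using (ih x i j).trans (le_mul_of_one_le_left (by linarith) one_le)

lemma weight_le_mul_pathProd {m : ℕ} (x : Fin (m + 1) → ℤ) (i : Fin (m + 1)) :
    weight (x i) ≤ weight (x 0) * pathProd weight x := by
  have := weight_add_le (x 0) (x i - x 0)
  rw [add_sub_cancel] at this
  exact this.trans (by gcongr; exact weight_sub_le_pathProd x i 0)

lemma exists_mul_nonpos_of_prod_neg {ι R : Type*} [Fintype ι] [CommRing R] [LinearOrder R]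
    [IsStrictOrderedRing R] (h : Even (Fintype.card ι)) {x : ι → R} (hx : ∏ i, x i < 0) (i : ι) :
    ∃ j, x i * x j ≤ 0 := by
  by_contra! pos
  have : 0 < ∏ j, x i * x j := Finset.prod_pos fun j _ => pos j
  rw [Finset.prod_mul_distrib, Finset.prod_const, Finset.card_univ] at this
  exact this.not_ge (mul_nonpos_of_nonneg_of_nonpos (h.pow_nonneg _) hx.le)

/- If the product is negative, every entry `x i` faces an entry `x j` of the opposite sign, so that
`|x i| ≤ |x i - x j|`. -/
lemma weight_le_pathProd_of_prod_neg {m : ℕ} (hm : Even (m + 1)) {x : Fin (m + 1) → ℤ}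
    (hx : ∏ i, (x i : ℝ) < 0) (i : Fin (m + 1)) : weight (x i) ≤ pathProd weight x := by
  obtain ⟨j, hj⟩ := exists_mul_nonpos_of_prod_neg (by simpa) hx i
  refine le_trans ?_ (weight_sub_le_pathProd x i j)
  have : |(x i : ℝ)| ≤ |(x i : ℝ) - x j| := sq_le_sq.1 (by nlinarith [sq_nonneg (x j : ℝ)])
  simpa [weight] using this

/-- The contribution `|x₀⋯xₘ| - x₀⋯xₘ` of the path `x` to the coefficients of the zeta-invariant. -/
def excess {m : ℕ} (x : Fin (m + 1) → ℤ) : ℝ :=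
  |∏ i, (x i : ℝ)| - ∏ i, (x i : ℝ)

lemma excess_nonneg {m : ℕ} (x : Fin (m + 1) → ℤ) : 0 ≤ excess x :=
  sub_nonneg.2 (le_abs_self _)

lemma excess_le {m : ℕ} (hm : Even (m + 1)) (x : Fin (m + 1) → ℤ) :
    excess x ≤ 2 * (weight (x 0) ^ 2)⁻¹ * pathProd weight x ^ (m + 3) := by
  have hP : 0 ≤ pathProd weight x := pathProd_nonneg (fun n => by positivity) x
  rcases le_or_gt 0 (∏ i, (x i : ℝ)) with hx | hx
  · rw [excess, abs_of_nonneg hx, sub_self]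
    positivity
  have bound := weight_le_pathProd_of_prod_neg hm hx
  calc excess x = 2 * ∏ i, |(x i : ℝ)| := by
        rw [excess, ← Finset.abs_prod, abs_of_neg hx]; ring
    _ ≤ 2 * ∏ _i : Fin (m + 1), pathProd weight x := by
        gcongr with i
        exact (le_add_of_nonneg_left zero_le_one).trans (bound i)
    _ = 2 * pathProd weight x ^ (m + 1) := by simp
    _ ≤ 2 * ((weight (x 0) ^ 2)⁻¹ * pathProd weight x ^ (m + 3)) := by
        rw [inv_mul_eq_div, pow_add _ (m + 1) 2]
        gcongr
        rw [le_div_iff₀ (by positivity)]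
        gcongr
        exact bound 0
    _ = _ := by ring

lemma RapidDecay.summable_excess_mul_pathProd {α : ℤ → ℂ} (hα : RapidDecay α) {m : ℕ}
    (hm : Even (m + 1)) :
    Summable fun x : Fin (m + 1) → ℤ => ‖(excess x : ℂ) * pathProd α x‖ := by
  refine hα.summable_mul_pathProd (summable_inv_weight_sq.mul_left 2) (fun n => by positivity)
    (m + 3) fun x => ?_
  simpa [abs_of_nonneg (excess_nonneg x)] using excess_le hm x

end Paths

section Operators

open scoped InnerProductSpace ComplexConjugate

/-- The rapidly decaying sequences as a subspace of `ℓ²(ℤ)`: a common invariant domain, with inner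
product, for the bounded Toeplitz operators and the unbounded diagonal ones. -/
def rapidSeq : Submodule ℂ (lp (fun _ : ℤ => ℂ) 2) where
  carrier := {x | RapidDecay x}
  zero_mem' := RapidDecay.zero
  add_mem' hx hy := RapidDecay.add hx hy
  smul_mem' c _ hx := RapidDecay.smul c hx

namespace rapidSeq

instance : FunLike rapidSeq ℤ ℂ where
  coe x := x.1
  coe_injective _ _ h := Subtype.ext (lp.ext h)

lemma rapidDecay (x : rapidSeq) : RapidDecay x := x.2

lemma summable_inner (x y : rapidSeq) : Summable fun n => conj (x n) * y n :=
  (lp.summable_inner x.1 y.1).congr fun _ => RCLike.inner_apply' _ _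

lemma inner_eq_tsum (x y : rapidSeq) : ⟪x, y⟫_ℂ = ∑' n, conj (x n) * y n :=
  (lp.inner_eq_tsum x.1 y.1).trans (tsum_congr fun _ => RCLike.inner_apply' _ _)

lemma norm_apply_le (x : rapidSeq) (n : ℤ) : ‖x n‖ ≤ ‖x‖ :=
  lp.norm_apply_le_norm two_ne_zero x.1 n

end rapidSeq

/-- A rapidly decaying sequence as an element of `rapidSeq`. -/
def RapidDecay.toSeq {x : ℤ → ℂ} (hx : RapidDecay x) : rapidSeq :=
  ⟨⟨x, hx.memℓp⟩, hx⟩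

variable {α : ℤ → ℂ}

/-- The operator of the Toeplitz matrix `(α (i - j))`. -/
def toeplitz (hα : RapidDecay α) : rapidSeq →ₗ[ℂ] rapidSeq where
  toFun x := (hα.discreteConv (rapidSeq.rapidDecay x)).toSeq
  map_add' x y := DFunLike.ext _ _ fun n => by
    have hx := hα.summable_discreteConv (rapidSeq.rapidDecay x) n
    have hy := hα.summable_discreteConv (rapidSeq.rapidDecay y) n
    exact (tsum_congr fun k => mul_add _ _ _).trans (hx.tsum_add hy)
  map_smul' c x := DFunLike.ext _ _ fun n =>
    (tsum_congr fun k => mul_left_comm _ _ _).trans tsum_mul_left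

lemma toeplitz_apply (hα : RapidDecay α) (x : rapidSeq) (n : ℤ) :
    toeplitz hα x n = ∑' k, α (n - k) * x k := rfl

/-- The operator of the real diagonal matrix with entries `c n`. -/
def diagonal (c : ℤ → ℝ) (hc : ∀ n, |c n| ≤ weight n) : rapidSeq →ₗ[ℂ] rapidSeq where
  toFun x :=
    ((rapidSeq.rapidDecay x).mul_of_le_weight (c := fun n => c n) (by simpa using hc)).toSeq
  map_add' x y := DFunLike.ext _ _ fun n => mul_add (c n : ℂ) (x n) (y n)
  map_smul' a x := DFunLike.ext _ _ fun n => mul_left_comm (c n : ℂ) a (x n)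

lemma diagonal_apply {c : ℤ → ℝ} (hc : ∀ n, |c n| ≤ weight n) (x : rapidSeq) (n : ℤ) :
    diagonal c hc x n = c n * x n := rfl

section Diagonal

variable {b c : ℤ → ℝ}

lemma conj_mul_diagonal (hc : ∀ n, |c n| ≤ weight n) (x : rapidSeq) (n : ℤ) :
    conj (x n) * diagonal c hc x n = (c n * ‖x n‖ ^ 2 : ℝ) := by
  rw [diagonal_apply, mul_left_comm, Complex.conj_mul']
  norm_cast

lemma summable_diagonal (hc : ∀ n, |c n| ≤ weight n) (x : rapidSeq) :
    Summable fun n => c n * ‖x n‖ ^ 2 := by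
  have := rapidSeq.summable_inner x (diagonal c hc x)
  simp only [conj_mul_diagonal] at this
  exact_mod_cast this

lemma inner_diagonal_self (hc : ∀ n, |c n| ≤ weight n) (x : rapidSeq) :
    ⟪x, diagonal c hc x⟫_ℂ = (∑' n, c n * ‖x n‖ ^ 2 : ℝ) := by
  simp only [rapidSeq.inner_eq_tsum, conj_mul_diagonal, Complex.ofReal_tsum]

lemma isPositive_diagonal (hc : ∀ n, |c n| ≤ weight n) (hc₀ : 0 ≤ c) :
    (diagonal c hc).IsPositive := by
  rw [LinearMap.isPositive_iff_complex]
  intro x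
  rw [← inner_conj_symm, inner_diagonal_self hc]
  refine ⟨by simp, ?_⟩
  simpa using tsum_nonneg fun n => mul_nonneg (hc₀ n) (sq_nonneg ‖x n‖)

lemma norm_inner_diagonal_self_le (hb : ∀ n, |b n| ≤ weight n) (hc : ∀ n, |c n| ≤ weight n)
    (hbc : ∀ n, |b n| ≤ c n) (x : rapidSeq) :
    ‖⟪x, diagonal b hb x⟫_ℂ‖ ≤ (⟪x, diagonal c hc x⟫_ℂ).re := by
  rw [inner_diagonal_self, inner_diagonal_self, Complex.norm_real, Complex.ofReal_re]
  exact tsum_of_norm_bounded (summable_diagonal hc x).hasSum fun n => by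
    rw [norm_mul, norm_pow, norm_norm]
    exact mul_le_mul_of_nonneg_right (hbc n) (by positivity)

end Diagonal

/-- The contribution of the path `x` to `⟪w, L (T L) ^ m v⟫`, where `L` is the diagonal matrix with
entries `c n` and `T` the Toeplitz matrix of `α`. -/
def pathTerm (α : ℤ → ℂ) (c : ℤ → ℝ) (v w : rapidSeq) {m : ℕ} (x : Fin (m + 1) → ℤ) : ℂ :=
  (∏ i, (c (x i) : ℂ)) * (v (x 0) * conj (w (x (Fin.last m)))) * pathProd α x

section Path

variable {c : ℤ → ℝ} {m : ℕ} (v w : rapidSeq)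

lemma summable_pathTerm (hα : RapidDecay α) (hc : ∀ n, |c n| ≤ weight n) :
    Summable fun x : Fin (m + 1) → ℤ => pathTerm α c v w x := by
  refine .of_norm <| hα.summable_mul_pathProd ((rapidSeq.rapidDecay v (m + 1)).mul_right ‖w‖)
    (fun n => by positivity) (m + 1) fun x => ?_
  have hP : 0 ≤ pathProd weight x := pathProd_nonneg (fun n => by positivity) x
  calc ‖(∏ i, (c (x i) : ℂ)) * (v (x 0) * conj (w (x (Fin.last m))))‖
      = (∏ i, |c (x i)|) * (‖v (x 0)‖ * ‖w (x (Fin.last m))‖) := by simp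
    _ ≤ (∏ _i : Fin (m + 1), weight (x 0) * pathProd weight x) * (‖v (x 0)‖ * ‖w‖) := by
      gcongr with i
      · exact (hc _).trans (weight_le_mul_pathProd x i)
      · exact rapidSeq.norm_apply_le w _
    _ = _ := by simp only [Finset.prod_const, Finset.card_fin, mul_pow]; ring

lemma hasSum_pathTerm_cons (hα : RapidDecay α) (hc : ∀ n, |c n| ≤ weight n)
    (x : Fin (m + 1) → ℤ) :
    HasSum (fun p => pathTerm α c v w (Fin.cons p x : Fin (m + 2) → ℤ))
      (pathTerm α c (toeplitz hα (diagonal c hc v)) w x) := by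
  have terms : ∀ p, pathTerm α c v w (Fin.cons p x : Fin (m + 2) → ℤ) =
      (∏ i, (c (x i) : ℂ)) * conj (w (x (Fin.last m))) * pathProd α x *
        (α (x 0 - p) * diagonal c hc v p) := fun p => by
    simp only [pathTerm, pathProd_cons, Fin.prod_univ_succ (n := m + 1), ← Fin.succ_last,
      Fin.cons_zero, Fin.cons_succ, diagonal_apply]
    ring
  have value : pathTerm α c (toeplitz hα (diagonal c hc v)) w x =
      (∏ i, (c (x i) : ℂ)) * conj (w (x (Fin.last m))) * pathProd α x *
        ∑' p, α (x 0 - p) * diagonal c hc v p := by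
    simp only [pathTerm, toeplitz_apply]
    ring
  rw [funext terms, value]
  exact (hα.summable_discreteConv (rapidSeq.rapidDecay _) _).hasSum.mul_left _

theorem hasSum_pathTerm (hα : RapidDecay α) (hc : ∀ n, |c n| ≤ weight n) :
    HasSum (fun x : Fin (m + 1) → ℤ => pathTerm α c v w x)
      ⟪w, diagonal c hc (((toeplitz hα * diagonal c hc) ^ m) v)⟫_ℂ := by
  induction m generalizing v with
  | zero =>
    rw [← (Equiv.funUnique (Fin 1) ℤ).symm.hasSum_iff]
    convert (rapidSeq.summable_inner w (diagonal c hc v)).hasSum using 1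
    · ext n
      simp [pathTerm, pathProd, diagonal_apply, mul_left_comm, mul_comm]
    · exact rapidSeq.inner_eq_tsum _ _
  | succ m ih =>
    let e := (Equiv.prodComm _ _).trans (Fin.consEquiv fun _ : Fin (m + 2) => ℤ)
    have total := e.hasSum_iff.2 (summable_pathTerm (m := m + 1) v w hα hc).hasSum
    have fibers := total.prod_fiberwise (hasSum_pathTerm_cons v w hα hc)
    rw [pow_succ, Module.End.mul_apply, Module.End.mul_apply,
      (ih (toeplitz hα (diagonal c hc v))).unique fibers]
    exact (summable_pathTerm v w hα hc).hasSum

end Path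

end Operators

section Trace

open scoped InnerProductSpace ComplexConjugate

variable {α : ℤ → ℂ} {v : ℤ → rapidSeq}

lemma summable_mul_of_tsum_norm_le {X Y : Type*} {f : X → ℂ} {g : X → Y → ℂ} {B : ℝ}
    (hf : Summable fun x => ‖f x‖) (hg : ∀ x, Summable fun y => ‖g x y‖)
    (hB : ∀ x, ∑' y, ‖g x y‖ ≤ B) : Summable fun z : X × Y => f z.1 * g z.1 z.2 := by
  refine .of_norm ((summable_prod_of_nonneg fun _ => norm_nonneg _).2 ⟨fun x => ?_, ?_⟩)
  · simpa only [norm_mul] using (hg x).mul_left ‖f x‖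
  · simp only [norm_mul, tsum_mul_left]
    exact (hf.mul_right B).of_nonneg_of_le
      (fun x => mul_nonneg (norm_nonneg _) (tsum_nonneg fun _ => norm_nonneg _))
      fun x => mul_le_mul_of_nonneg_left (hB x) (norm_nonneg _)

/-- The decomposition `(α (p - q)) = ∑ₙ vₙ vₙ*` of the Toeplitz matrix of `α` into rank-one
matrices. -/
def ToeplitzDecomposition (α : ℤ → ℂ) (v : ℤ → rapidSeq) : Prop :=
  ∀ p q, HasSum (fun n => v n p * conj (v n q)) (α (p - q))

namespace ToeplitzDecomposition

lemma hasSum_sq_norm (hv : ToeplitzDecomposition α v) (p : ℤ) :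
    HasSum (fun n => ‖v n p‖ ^ 2) (α 0).re := by
  have h := hv p p
  simp only [Complex.mul_conj', sub_self] at h
  simpa [← Complex.ofReal_pow] using Complex.hasSum_re h

lemma summable_norm_mul_norm (hv : ToeplitzDecomposition α v) (p q : ℤ) :
    (Summable fun n => ‖v n p‖ * ‖v n q‖) ∧ ∑' n, ‖v n p‖ * ‖v n q‖ ≤ (α 0).re := by
  have mean : HasSum (fun n => (‖v n p‖ ^ 2 + ‖v n q‖ ^ 2) / 2) (α 0).re := by
    simpa using ((hv.hasSum_sq_norm p).add (hv.hasSum_sq_norm q)).div_const 2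
  have am_gm : ∀ n, ‖v n p‖ * ‖v n q‖ ≤ (‖v n p‖ ^ 2 + ‖v n q‖ ^ 2) / 2 := fun n => by
    linarith [two_mul_le_add_sq ‖v n p‖ ‖v n q‖]
  have summable := mean.summable.of_nonneg_of_le (fun n => by positivity) am_gm
  exact ⟨summable, hasSum_le am_gm summable.hasSum mean⟩

theorem hasSum_tsum (hv : ToeplitzDecomposition α v) {X : Type*} {f : X → ℂ}
    (hf : Summable fun x => ‖f x‖) (p q : X → ℤ) :
    HasSum (fun n => ∑' x, f x * (v n (p x) * conj (v n (q x)))) (∑' x, f x * α (p x - q x)) := by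
  have pair := fun x => hv.summable_norm_mul_norm (p x) (q x)
  have summable : Summable fun y : X × ℤ => f y.1 * (v y.2 (p y.1) * conj (v y.2 (q y.1))) :=
    summable_mul_of_tsum_norm_le (g := fun x n => v n (p x) * conj (v n (q x))) hf
      (fun x => by simpa using (pair x).1) fun x => by simpa using (pair x).2
  have rows := summable.hasSum.prod_fiberwise fun x => (hv (p x) (q x)).mul_left (f x)
  have columns := ((Equiv.prodComm _ _).hasSum_iff.2 summable.hasSum).prod_fiberwise fun n =>
    (summable.prod_symm.prod_factor n).hasSum
  rw [rows.tsum_eq]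
  exact columns

theorem hasSum_inner_toeplitz (hα : RapidDecay α) (hv : ToeplitzDecomposition α v) (x : rapidSeq) :
    HasSum (fun n => ((‖⟪v n, x⟫_ℂ‖ ^ 2 : ℝ) : ℂ)) ⟪x, toeplitz hα x⟫_ℂ := by
  have hf : Summable fun y : ℤ × ℤ => ‖conj (x y.1) * x y.2‖ := by
    have hx := (rapidSeq.rapidDecay x).summable_norm
    simpa using hx.mul_of_nonneg hx (fun n => norm_nonneg _) fun n => norm_nonneg _
  have form : ⟪x, toeplitz hα x⟫_ℂ = ∑' y : ℤ × ℤ, conj (x y.1) * x y.2 * α (y.1 - y.2) := by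
    rw [(hα.summable_mul_comp hf fun y => y.1 - y.2).tsum_prod, rapidSeq.inner_eq_tsum]
    simp only [toeplitz_apply, ← tsum_mul_left, mul_left_comm, mul_comm]
  rw [form]
  convert hv.hasSum_tsum hf Prod.fst Prod.snd with n
  have hv₁ := (rapidSeq.summable_inner x (v n)).norm
  have hv₂ := (rapidSeq.summable_inner (v n) x).norm
  have symm : conj ⟪v n, x⟫_ℂ = ⟪x, v n⟫_ℂ := inner_conj_symm x (v n)
  rw [Complex.ofReal_pow, ← Complex.conj_mul', symm, rapidSeq.inner_eq_tsum,
    rapidSeq.inner_eq_tsum, tsum_mul_tsum_of_summable_norm hv₁ hv₂]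
  exact tsum_congr fun y => by ring

theorem isPositive_toeplitz (hα : RapidDecay α) (hv : ToeplitzDecomposition α v) :
    (toeplitz hα).IsPositive := by
  rw [LinearMap.isPositive_iff_complex]
  intro x
  have h := hv.hasSum_inner_toeplitz hα x
  rw [← inner_conj_symm, ← h.tsum_eq, ← Complex.ofReal_tsum]
  refine ⟨by simp, ?_⟩
  simpa using tsum_nonneg fun n => sq_nonneg ‖⟪v n, x⟫_ℂ‖

end ToeplitzDecomposition

/-- Multiplication of the `n`-th entry by `n`: the Fourier side of `-i d/dθ`. -/
def position : rapidSeq →ₗ[ℂ] rapidSeq :=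
  diagonal (fun n => n) fun n => by simp [weight]

/-- Multiplication of the `n`-th entry by `|n|`. -/
def absPosition : rapidSeq →ₗ[ℂ] rapidSeq :=
  diagonal (fun n => |(n : ℝ)|) fun n => by simp [weight]

theorem ToeplitzDecomposition.hasSum_excess (hα : RapidDecay α) (hv : ToeplitzDecomposition α v)
    {m : ℕ} (hm : Even (m + 1)) :
    HasSum (fun n => ⟪v n, absPosition (((toeplitz hα * absPosition) ^ m) (v n))⟫_ℂ -
        ⟪v n, position (((toeplitz hα * position) ^ m) (v n))⟫_ℂ)
      (∑' x : Fin (m + 1) → ℤ, (excess x : ℂ) * pathProd α x * α (x 0 - x (Fin.last m))) := by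
  have terms : ∀ n (x : Fin (m + 1) → ℤ),
      pathTerm α (fun n => |(n : ℝ)|) (v n) (v n) x - pathTerm α (fun n => n) (v n) (v n) x =
        excess x * pathProd α x * (v n (x 0) * conj (v n (x (Fin.last m)))) := fun n x => by
    rw [pathTerm, pathTerm, excess, Finset.abs_prod]
    push_cast
    ring
  have paths := fun n => (hasSum_pathTerm (m := m) (v n) (v n) hα
    (c := fun n => |(n : ℝ)|) fun n => by simp [weight]).sub
      (hasSum_pathTerm (v n) (v n) hα (c := fun n => n) fun n => by simp [weight])
  simp only [terms] at paths
  simpa only [(paths _).tsum_eq, absPosition, position] using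
    hv.hasSum_tsum (hα.summable_excess_mul_pathProd hm) (fun x => x 0) fun x => x (Fin.last m)

end Trace

section ZetaSum

/-- The sum defining the zeta-invariant, for an arbitrary sequence `α` in place of the Fourier
coefficients and an arbitrary number `M` of factors. -/
def zetaSum (M : ℕ) (α : ℤ → ℂ) : ℂ :=
  ∑' j : {j : Fin M → ℤ // ∑ i, j i = 0}, (Ncoef M j.val : ℂ) * ∏ i, α (j.val i)

/-- A tuple with vanishing sum is determined by all its entries but the last. -/
def zeroSumEquiv (m : ℕ) : {j : Fin (m + 1) → ℤ // ∑ i, j i = 0} ≃ (Fin m → ℤ) where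
  toFun j := Fin.init j.val
  invFun d := ⟨Fin.snoc d (-∑ i, d i), by simp [Fin.sum_univ_castSucc]⟩
  left_inv j := by
    have : j.val (Fin.last m) = -∑ i, Fin.init j.val i := by
      have := j.property
      rw [Fin.sum_univ_castSucc] at this
      simpa [Fin.init] using eq_neg_of_add_eq_zero_right this
    ext1
    simp [← this]
  right_inv d := by simp

/-- The closed path `n, n + j₁, n + j₁ + j₂, …` starting at `n`, whose steps have sum zero. -/
def closedPathEquiv (m : ℕ) : {j : Fin (m + 1) → ℤ // ∑ i, j i = 0} × ℤ ≃ (Fin (m + 1) → ℤ) :=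
  ((Equiv.prodComm _ _).trans ((Equiv.refl ℤ).prodCongr (zeroSumEquiv m))).trans (pathEquiv m)

section ClosedPath

variable {m : ℕ} (j : {j : Fin (m + 1) → ℤ // ∑ i, j i = 0}) (n : ℤ)

lemma closedPathEquiv_apply (i : Fin (m + 1)) :
    closedPathEquiv m (j, n) i = n + ∑ l ∈ Finset.Iio i, j.val l := by
  have : closedPathEquiv m (j, n) i = n + Fin.partialSum (Fin.init j.val) i := rfl
  rw [this, Fin.partialSum_init, Fin.partialSum, Fin.val_castSucc, List.sum_take_ofFn]
  exact congrArg _ (Finset.sum_congr (by ext; simp) fun _ _ => rfl)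

lemma closedPathEquiv_zero : closedPathEquiv m (j, n) 0 = n := by
  simp [closedPathEquiv, pathEquiv]

lemma closedPathEquiv_zero_sub_last :
    closedPathEquiv m (j, n) 0 - closedPathEquiv m (j, n) (Fin.last m) = j.val (Fin.last m) := by
  have closed := j.property
  rw [Fin.sum_univ_castSucc] at closed
  rw [closedPathEquiv_zero, closedPathEquiv_apply, Fin.Iio_last_eq_map, Finset.sum_map]
  simpa using (eq_neg_of_add_eq_zero_right closed).symm

lemma pathProd_closedPathEquiv (α : ℤ → ℂ) :
    pathProd α (closedPathEquiv m (j, n)) * α (j.val (Fin.last m)) = ∏ i, α (j.val i) := by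
  have steps := congrArg Prod.snd ((pathEquiv m).symm_apply_apply (n, Fin.init j.val))
  rw [Fin.prod_univ_castSucc]
  exact congrArg (· * _) (Finset.prod_congr rfl fun i _ => congrArg α (congrFun steps i))

lemma excess_closedPathEquiv :
    excess (closedPathEquiv m (j, n)) =
      ((|prodPoly (m + 1) j.val n| - prodPoly (m + 1) j.val n : ℤ) : ℝ) := by
  simp [excess, prodPoly, closedPathEquiv_apply]

end ClosedPath

theorem zetaSum_eq_tsum_paths {α : ℤ → ℂ} (hα : RapidDecay α) {m : ℕ} (hm : Even (m + 1)) :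
    zetaSum (m + 1) α =
      ∑' x : Fin (m + 1) → ℤ, (excess x : ℂ) * pathProd α x * α (x 0 - x (Fin.last m)) := by
  have terms : ∀ y : {j : Fin (m + 1) → ℤ // ∑ i, j i = 0} × ℤ,
      (excess (closedPathEquiv m y) : ℂ) * pathProd α (closedPathEquiv m y) *
          α (closedPathEquiv m y 0 - closedPathEquiv m y (Fin.last m)) =
        ((|prodPoly (m + 1) y.1.val y.2| - prodPoly (m + 1) y.1.val y.2 : ℤ) : ℝ) *
          ∏ i, α (y.1.val i) := fun y => by
    rw [excess_closedPathEquiv, closedPathEquiv_zero_sub_last, mul_assoc, pathProd_closedPathEquiv]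
  have summable := hα.summable_mul_comp (hα.summable_excess_mul_pathProd hm)
    fun x => x 0 - x (Fin.last m)
  have closed := (closedPathEquiv m).summable_iff.2 summable
  simp only [Function.comp_def, terms] at closed
  rw [← (closedPathEquiv m).tsum_eq, tsum_congr terms, closed.tsum_prod]
  simp only [zetaSum, Ncoef, Complex.ofReal_tsum, tsum_mul_right]

end ZetaSum

section Growth

open scoped InnerProductSpace

variable {α : ℤ → ℂ} {hα : RapidDecay α} {u v : rapidSeq} {n : ℤ}

lemma toeplitz_mul_position_pow_apply (hu : toeplitz hα u = v)
    (hv : position v = (n : ℂ) • u) (m : ℕ) :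
    ((toeplitz hα * position) ^ m) v = (n : ℂ) ^ m • v := by
  induction m with
  | zero => simp
  | succ m ih => rw [pow_succ', Module.End.mul_apply, ih, map_smul, Module.End.mul_apply, hv,
      map_smul, hu, smul_smul, pow_succ]

lemma inner_position_pow (hu : toeplitz hα u = v) (hv : position v = (n : ℂ) • u)
    (huv : ⟪v, u⟫_ℂ = 1) (m : ℕ) :
    ⟪v, position (((toeplitz hα * position) ^ m) v)⟫_ℂ = (n : ℂ) ^ (m + 1) := by
  rw [toeplitz_mul_position_pow_apply hu hv, map_smul, hv, smul_smul, inner_smul_right, huv,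
    mul_one, pow_succ]

lemma re_inner_absPosition_pow (hC : (toeplitz hα).IsPositive) (hu : toeplitz hα u = v) (m : ℕ) :
    (⟪v, absPosition (((toeplitz hα * absPosition) ^ m) v)⟫_ℂ).re =
      moment (toeplitz hα) absPosition u (m + 1) := by
  rw [moment, pow_succ', mul_assoc, Module.End.mul_apply, Module.End.mul_apply,
    Module.End.mul_apply, hu, ← hC.isSymmetric, hu]
  rfl

lemma isPositive_absPosition : absPosition.IsPositive :=
  isPositive_diagonal _ fun _ => abs_nonneg _

lemma norm_inner_position_le (x : rapidSeq) :
    ‖⟪x, position x⟫_ℂ‖ ≤ (⟪x, absPosition x⟫_ℂ).re :=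
  norm_inner_diagonal_self_le _ _ (fun _ => le_rfl) x

lemma absPosition_eq_zero {x : rapidSeq} (hx : position x = 0) : absPosition x = 0 :=
  DFunLike.ext _ _ fun n => by
    have h := DFunLike.congr_fun hx n
    rw [position, diagonal_apply] at h
    rw [absPosition, diagonal_apply]
    rcases mul_eq_zero.1 h with h | h
    · rw [Complex.ofReal_eq_zero.1 h, abs_zero, Complex.ofReal_zero, zero_mul]
      rfl
    · rw [h, mul_zero]
      rfl

theorem pow_abs_sub_le_moment (hC : (toeplitz hα).IsPositive) (hu : toeplitz hα u = v)
    (hv : position v = (n : ℂ) • u) (huv : ⟪v, u⟫_ℂ = 1) (hn : n ≠ 0) (m : ℕ) :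
    |(n : ℝ)| ^ (m + 2) - |(n : ℝ)| ^ m ≤
      moment (toeplitz hα) absPosition u (m + 2) - moment (toeplitz hα) absPosition u m := by
  have zeroth : moment (toeplitz hα) absPosition u 0 = 1 := by
    rw [moment, pow_zero, one_mul, ← hC.isSymmetric, hu, huv, RCLike.one_re]
  have first : |(n : ℝ)| ≤ moment (toeplitz hα) absPosition u 1 := by
    have eigenvalue : ⟪v, position v⟫_ℂ = n :=
      (inner_position_pow hu hv huv 0).trans (pow_one _)
    calc |(n : ℝ)| = ‖⟪v, position v⟫_ℂ‖ := by rw [eigenvalue, Complex.norm_intCast]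
      _ ≤ (⟪v, absPosition v⟫_ℂ).re := norm_inner_position_le v
      _ = moment (toeplitz hα) absPosition u 1 := re_inner_absPosition_pow hC hu 0
  exact pow_sub_pow_le_moment_sub_moment hC isPositive_absPosition
    (by exact_mod_cast Int.one_le_abs hn) zeroth first m

theorem zetaSum_re_le_zetaSum_add_two_re {u v : ℤ → rapidSeq} (hv : ToeplitzDecomposition α v)
    (hu : ∀ n, toeplitz hα (u n) = v n) (hD : ∀ n, position (v n) = (n : ℂ) • u n)
    (huv : ∀ n, ⟪v n, u n⟫_ℂ = 1) {m : ℕ} (hm : Even (m + 1)) :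
    (zetaSum (m + 1) α).re ≤ (zetaSum (m + 3) α).re := by
  have hC := hv.isPositive_toeplitz hα
  have hm' : Even (m + 2 + 1) := hm.add even_two
  rw [zetaSum_eq_tsum_paths hα hm, zetaSum_eq_tsum_paths hα hm']
  refine hasSum_le (fun n => ?_) (Complex.hasSum_re (hv.hasSum_excess hα hm))
    (Complex.hasSum_re (hv.hasSum_excess hα hm'))
  have re_pow : ∀ {k}, Even k → ((n : ℂ) ^ k).re = |(n : ℝ)| ^ k := fun hk => by
    rw [hk.pow_abs]
    norm_cast
  rw [Complex.sub_re, Complex.sub_re, re_inner_absPosition_pow hC (hu n),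
    re_inner_absPosition_pow hC (hu n), inner_position_pow (hu n) (hD n) (huv n),
    inner_position_pow (hu n) (hD n) (huv n), re_pow hm, re_pow hm']
  rcases eq_or_ne n 0 with rfl | hn
  · have kernel : absPosition (toeplitz hα (u 0)) = 0 :=
      absPosition_eq_zero (by rw [hu, hD, Int.cast_zero, zero_smul])
    simp [moment_succ_of_apply_eq_zero kernel]
  · linarith [pow_abs_sub_le_moment hC (hu n) (hD n) (huv n) hn (m + 1)]

end Growth

section Fourier

open scoped ComplexConjugate

/-- The character `θ ↦ e^{inθ}` of the circle `ℝ/2πℤ`, as a function on `ℝ`. -/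
def expMode (n : ℤ) (θ : ℝ) : ℂ :=
  Complex.exp (Complex.I * n * θ)

lemma expMode_add (m n : ℤ) (θ : ℝ) : expMode (m + n) θ = expMode m θ * expMode n θ := by
  rw [expMode, expMode, expMode, ← Complex.exp_add]
  push_cast
  ring_nf

lemma conj_expMode (n : ℤ) (θ : ℝ) : conj (expMode n θ) = expMode (-n) θ := by
  simp [expMode, ← Complex.exp_conj]

lemma norm_expMode (n : ℤ) (θ : ℝ) : ‖expMode n θ‖ = 1 := by
  simp [expMode, Complex.norm_exp]

lemma conj_expMode_mul_expMode (n : ℤ) (θ : ℝ) : conj (expMode n θ) * expMode n θ = 1 := by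
  simp [Complex.conj_mul', norm_expMode]

lemma periodic_expMode (n : ℤ) : Function.Periodic (expMode n) (2 * π) := fun θ =>
  Complex.exp_eq_exp_iff_exists_int.2 ⟨n, by push_cast; ring⟩

lemma contDiff_expMode (n : ℤ) : ContDiff ℝ (⊤ : ℕ∞) (expMode n) :=
  (contDiff_const.mul Complex.ofRealCLM.contDiff).cexp

lemma hasDerivAt_expMode (n : ℤ) (θ : ℝ) :
    HasDerivAt (expMode n) (Complex.I * n * expMode n θ) θ := by
  change HasDerivAt (fun θ : ℝ => Complex.exp (Complex.I * n * θ)) _ θ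
  simpa [expMode, mul_comm] using
    ((Complex.ofRealCLM.hasDerivAt (x := θ)).const_mul (Complex.I * (n : ℂ))).cexp

@[fun_prop]
lemma continuous_expMode (n : ℤ) : Continuous (expMode n) :=
  (contDiff_expMode n).continuous

/-- The mean of a `2π`-periodic function over a period. -/
def mean (f : ℝ → ℂ) : ℂ :=
  (2 * π)⁻¹ * ∫ θ in (0 : ℝ)..(2 * π), f θ

lemma fCoef_eq_mean (u : ℝ → ℂ) (n : ℤ) : fCoef u n = mean fun θ => u θ * expMode (-n) θ := by
  simp [fCoef, mean, expMode]

lemma mean_const_mul (c : ℂ) (f : ℝ → ℂ) : (mean fun θ => c * f θ) = c * mean f := by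
  rw [mean, intervalIntegral.integral_const_mul, mul_left_comm, mean]

lemma mean_const (c : ℂ) : (mean fun _ => c) = c := by
  rw [mean, intervalIntegral.integral_const, sub_zero, Complex.real_smul, Complex.ofReal_inv,
    inv_mul_cancel_left₀ (Complex.ofReal_ne_zero.2 two_pi_pos.ne')]

lemma conj_mean (f : ℝ → ℂ) : conj (mean f) = mean fun θ => conj (f θ) := by
  rw [mean, map_mul, Complex.conj_ofReal, mean]
  simp only [intervalIntegral, map_sub, integral_conj]

lemma fCoef_const_mul (c : ℂ) (u : ℝ → ℂ) (n : ℤ) :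
    fCoef (fun θ => c * u θ) n = c * fCoef u n := by
  simp only [fCoef_eq_mean, mul_assoc, mean_const_mul]

lemma norm_fCoef_le (u : ℝ → ℂ) (n : ℤ) :
    ‖fCoef u n‖ ≤ (2 * π)⁻¹ * ∫ θ in (0 : ℝ)..(2 * π), ‖u θ‖ := by
  rw [fCoef_eq_mean, mean, norm_mul, Complex.norm_of_nonneg (by positivity)]
  gcongr
  simpa only [norm_mul, norm_expMode, mul_one] using
    intervalIntegral.norm_integral_le_integral_norm (μ := volume)
      (f := fun θ => u θ * expMode (-n) θ) two_pi_pos.le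

theorem fCoef_of_hasDerivAt {u u' : ℝ → ℂ} (hu : ∀ θ, HasDerivAt u (u' θ) θ)
    (hu' : Continuous u') (hper : Function.Periodic u (2 * π)) (n : ℤ) :
    fCoef u' n = Complex.I * n * fCoef u n := by
  have parts := intervalIntegral.integral_mul_deriv_eq_deriv_mul (a := 0) (b := 2 * π)
    (fun θ _ => hu θ) (fun θ _ => hasDerivAt_expMode (-n) θ) (hu'.intervalIntegrable _ _)
    ((by fun_prop : Continuous _).intervalIntegrable _ _)
  simp only [mul_left_comm (u _), intervalIntegral.integral_const_mul, hper.eq,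
    (periodic_expMode (-n)).eq, sub_self, zero_sub] at parts
  rw [fCoef_eq_mean, fCoef_eq_mean, mean, mean, ← neg_eq_iff_eq_neg.2 parts]
  push_cast
  ring

theorem rapidDecay_fCoef {u : ℝ → ℂ} (hu : ContDiff ℝ (⊤ : ℕ∞) u)
    (hper : Function.Periodic u (2 * π)) : RapidDecay (fCoef u) := by
  refine .of_bound fun N => ?_
  induction N generalizing u with
  | zero => exact ⟨_, fun n => by simpa using norm_fCoef_le u n⟩
  | succ N ih =>
    obtain ⟨hdiff, hderiv⟩ := contDiff_infty_iff_deriv.1 hu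
    have hper' : Function.Periodic (deriv u) (2 * π) := fun θ => by
      rw [← deriv_comp_add_const, funext hper]
    have coef := fCoef_of_hasDerivAt (fun θ => (hdiff θ).hasDerivAt) hderiv.continuous hper
    obtain ⟨M, hM⟩ := ih hu hper
    obtain ⟨M', hM'⟩ := ih hderiv hper'
    refine ⟨M + M', fun n => ?_⟩
    calc weight n ^ (N + 1) * ‖fCoef u n‖
        = weight n ^ N * ‖fCoef u n‖ + weight n ^ N * ‖fCoef (deriv u) n‖ := by
          simp only [coef, weight, norm_mul, Complex.norm_I, Complex.norm_intCast]
          ring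
      _ ≤ M + M' := add_le_add (hM n) (hM' n)

/-- A continuous `2π`-periodic function as a function on the circle. -/
def toCircleMap {f : ℝ → ℂ} (hf : Continuous f) (hper : Function.Periodic f (2 * π)) :
    C(AddCircle (2 * π), ℂ) :=
  ⟨hper.lift, continuous_coinduced_dom.2 hf⟩

section Parseval

local instance : Fact (0 < 2 * π) := ⟨two_pi_pos⟩

variable {f g : ℝ → ℂ}

lemma fourierCoeff_toCircleMap (hf : Continuous f) (hper : Function.Periodic f (2 * π)) (n : ℤ) :
    fourierCoeff (toCircleMap hf hper) n = fCoef f n := by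
  have character : ∀ θ : ℝ, fourier (-n) (θ : AddCircle (2 * π)) = expMode (-n) θ := fun θ => by
    rw [fourier_coe_apply, expMode]
    congr 1
    push_cast
    field_simp
  rw [fourierCoeff_eq_intervalIntegral _ n 0, zero_add, fCoef_eq_mean, mean, one_div,
    Complex.real_smul]
  simp only [character, smul_eq_mul, mul_comm (expMode _ _)]
  rfl

theorem parseval (hf : Continuous f) (hg : Continuous g) (hfper : Function.Periodic f (2 * π))
    (hgper : Function.Periodic g (2 * π)) :
    HasSum (fun n => conj (fCoef f n) * fCoef g n) (mean fun θ => conj (f θ) * g θ) := by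
  let F := ContinuousMap.toLp (E := ℂ) 2 AddCircle.haarAddCircle ℂ (toCircleMap hf hfper)
  let G := ContinuousMap.toLp (E := ℂ) 2 AddCircle.haarAddCircle ℂ (toCircleMap hg hgper)
  have coef : ∀ n, inner ℂ F (fourierBasis n) * inner ℂ (fourierBasis n) G =
      conj (fCoef f n) * fCoef g n := fun n => by
    rw [← inner_conj_symm, ← HilbertBasis.repr_apply_apply, ← HilbertBasis.repr_apply_apply,
      fourierBasis_repr, fourierBasis_repr, fourierCoeff_toLp, fourierCoeff_toLp,
      fourierCoeff_toCircleMap, fourierCoeff_toCircleMap]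
  have integral : inner ℂ F G = mean fun θ => conj (f θ) * g θ := by
    rw [ContinuousMap.inner_toLp, AddCircle.integral_haarAddCircle,
      ← AddCircle.intervalIntegral_preimage (2 * π) 0, zero_add, Complex.real_smul, mean]
    simp only [mul_comm (conj (f _))]
    rfl
  simpa only [coef, integral] using (fourierBasis (T := 2 * π)).hasSum_inner_mul_inner F G

end Parseval

theorem hasSum_fCoef_mul {u w : ℝ → ℂ} (hu : Continuous u) (hw : Continuous w)
    (huper : Function.Periodic u (2 * π)) (hwper : Function.Periodic w (2 * π)) (n : ℤ) :
    HasSum (fun k => fCoef u (n - k) * fCoef w k) (fCoef (fun θ => u θ * w θ) n) := by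
  have coef : ∀ k, conj (fCoef (fun θ => conj (u θ) * expMode n θ) k) = fCoef u (n - k) :=
    fun k => by
    simp only [fCoef_eq_mean, conj_mean, map_mul, Complex.conj_conj, mul_assoc,
      ← expMode_add, conj_expMode, ← sub_eq_add_neg, neg_sub]
  have value : (mean fun θ => conj (conj (u θ) * expMode n θ) * w θ) =
      fCoef (fun θ => u θ * w θ) n := by
    simp only [fCoef_eq_mean, map_mul, Complex.conj_conj, conj_expMode, mul_right_comm]
  simpa only [coef, value] using parseval (f := fun θ => conj (u θ) * expMode n θ)
    (by fun_prop) hw (fun θ => by simp only [huper θ, periodic_expMode n θ]) hwper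

end Fourier

section ArcLength

open scoped ComplexConjugate

/-- The smooth positive `2π`-periodic functions `a` with `∫₀^{2π} a⁻¹ = 2π`: the speeds
`a = dθ/ds` of the reparametrizations of the circle `ℝ/2πℤ` by a parameter `s ∈ ℝ/2πℤ`. -/
structure IsCircleSpeed (a : ℝ → ℝ) : Prop where
  contDiff : ContDiff ℝ (⊤ : ℕ∞) a
  periodic : Function.Periodic a (2 * π)
  pos : ∀ θ, 0 < a θ
  integral_inv : ∫ θ in (0 : ℝ)..(2 * π), (a θ)⁻¹ = 2 * π

/-- The parameter `s = ∫₀^θ a⁻¹` for which `a = dθ/ds`. -/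
def arcLength (a : ℝ → ℝ) (θ : ℝ) : ℝ :=
  ∫ t in (0 : ℝ)..θ, (a t)⁻¹

/-- The character `e^{ins}` of the arc length parameter `s`, as a function of `θ`. -/
def arcMode (a : ℝ → ℝ) (n : ℤ) (θ : ℝ) : ℂ :=
  expMode n (arcLength a θ)

/-- The derivative of `e^{ins}` with respect to `θ`, divided by `i n`. -/
def arcModeDensity (a : ℝ → ℝ) (n : ℤ) (θ : ℝ) : ℂ :=
  (a θ : ℂ)⁻¹ * arcMode a n θ

namespace IsCircleSpeed

variable {a : ℝ → ℝ} (ha : IsCircleSpeed a)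

include ha

lemma contDiff_inv : ContDiff ℝ (⊤ : ℕ∞) fun θ => (a θ)⁻¹ :=
  ha.contDiff.inv fun θ => (ha.pos θ).ne'

lemma periodic_inv : Function.Periodic (fun θ => (a θ)⁻¹) (2 * π) := fun θ =>
  congrArg _ (ha.periodic θ)

lemma ofReal_ne_zero (θ : ℝ) : (a θ : ℂ) ≠ 0 :=
  Complex.ofReal_ne_zero.2 (ha.pos θ).ne'

lemma contDiff_ofReal : ContDiff ℝ (⊤ : ℕ∞) fun θ => (a θ : ℂ) :=
  Complex.ofRealCLM.contDiff.comp ha.contDiff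

lemma periodic_ofReal : Function.Periodic (fun θ => (a θ : ℂ)) (2 * π) := fun θ =>
  congrArg _ (ha.periodic θ)

lemma hasDerivAt_arcLength (θ : ℝ) : HasDerivAt (arcLength a) (a θ)⁻¹ θ :=
  (ha.contDiff_inv.continuous.integral_hasStrictDerivAt 0 θ).hasDerivAt

lemma contDiff_arcLength : ContDiff ℝ (⊤ : ℕ∞) (arcLength a) := by
  refine contDiff_infty_iff_deriv.2 ⟨fun θ => (ha.hasDerivAt_arcLength θ).differentiableAt, ?_⟩
  rw [funext fun θ => (ha.hasDerivAt_arcLength θ).deriv]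
  exact ha.contDiff_inv

lemma strictMono_arcLength : StrictMono (arcLength a) :=
  strictMono_of_hasDerivAt_pos ha.hasDerivAt_arcLength fun θ => inv_pos.2 (ha.pos θ)

lemma arcLength_add_two_pi (θ : ℝ) : arcLength a (θ + 2 * π) = arcLength a θ + 2 * π := by
  rw [arcLength, ha.periodic_inv.intervalIntegral_add_eq_add 0 θ fun _ _ =>
    ha.contDiff_inv.continuous.intervalIntegrable _ _, zero_add, ha.integral_inv, arcLength]

lemma surjective_arcLength : Function.Surjective (arcLength a) := by
  have integrable := ha.contDiff_inv.continuous.intervalIntegrable (μ := volume) 0 (2 * π)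
  have pos := fun θ => inv_pos.2 (ha.pos θ)
  exact ha.contDiff_arcLength.continuous.surjective
    (ha.periodic_inv.tendsto_atTop_intervalIntegral_of_pos' integrable pos two_pi_pos)
    (ha.periodic_inv.tendsto_atBot_intervalIntegral_of_pos' integrable pos two_pi_pos)

lemma exists_inverse_arcLength : ∃ ψ : ℝ → ℝ, Continuous ψ ∧ (∀ θ, ψ (arcLength a θ) = θ) ∧
    ∀ s, ψ (s + 2 * π) = ψ s + 2 * π := by
  let e := ha.strictMono_arcLength.orderIsoOfSurjective _ ha.surjective_arcLength
  have left_inv : ∀ θ, e.symm (arcLength a θ) = θ := e.symm_apply_apply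
  refine ⟨e.symm, e.symm.continuous, left_inv, fun s => ?_⟩
  obtain ⟨θ, rfl⟩ := ha.surjective_arcLength s
  rw [← ha.arcLength_add_two_pi, left_inv, left_inv]

theorem mean_comp_arcLength {F : ℝ → ℂ} (hF : Continuous F) :
    (mean fun θ => (a θ : ℂ)⁻¹ * F (arcLength a θ)) = mean F := by
  have subst := intervalIntegral.integral_deriv_smul_comp (a := 0) (b := 2 * π)
    (fun θ _ => ha.hasDerivAt_arcLength θ) ha.contDiff_inv.continuous.continuousOn hF
  have total : arcLength a (2 * π) = 2 * π := ha.integral_inv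
  have start : arcLength a 0 = 0 := intervalIntegral.integral_same
  rw [total, start] at subst
  simp only [mean, ← subst, Complex.real_smul, Complex.ofReal_inv, Function.comp_apply]

theorem hasSum_mean_mul_arcMode {h k : ℝ → ℂ} (hh : Continuous h) (hk : Continuous k)
    (hhper : Function.Periodic h (2 * π)) (hkper : Function.Periodic k (2 * π)) :
    HasSum (fun n => conj (mean fun θ => (a θ : ℂ)⁻¹ * (h θ * arcMode a (-n) θ)) *
        mean fun θ => (a θ : ℂ)⁻¹ * (k θ * arcMode a (-n) θ))
      (mean fun θ => (a θ : ℂ)⁻¹ * (conj (h θ) * k θ)) := by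
  obtain ⟨ψ, hψ, left_inv, hψper⟩ := ha.exists_inverse_arcLength
  have coef : ∀ {f : ℝ → ℂ}, Continuous f → ∀ n,
      (mean fun θ => (a θ : ℂ)⁻¹ * (f θ * arcMode a (-n) θ)) = fCoef (f ∘ ψ) n := fun hf n => by
    rw [fCoef_eq_mean, ← ha.mean_comp_arcLength (F := fun s => (_ ∘ ψ) s * _) (by fun_prop)]
    simp only [Function.comp_apply, left_inv, arcMode]
  have value : (mean fun θ => (a θ : ℂ)⁻¹ * (conj (h θ) * k θ)) =
      mean fun s => conj ((h ∘ ψ) s) * (k ∘ ψ) s := by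
    rw [← ha.mean_comp_arcLength (F := fun s => conj ((h ∘ ψ) s) * (k ∘ ψ) s) (by fun_prop)]
    simp only [Function.comp_apply, left_inv]
  -- Parseval's identity in the arc length parameter
  simp only [coef hh, coef hk, value]
  exact parseval (hh.comp hψ) (hk.comp hψ) (fun s => by simp [hψper, hhper (ψ s)])
    fun s => by simp [hψper, hkper (ψ s)]

lemma contDiff_arcMode (n : ℤ) : ContDiff ℝ (⊤ : ℕ∞) (arcMode a n) :=
  (contDiff_expMode n).comp ha.contDiff_arcLength

lemma periodic_arcMode (n : ℤ) : Function.Periodic (arcMode a n) (2 * π) := fun θ => by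
  rw [arcMode, ha.arcLength_add_two_pi, periodic_expMode, arcMode]

lemma contDiff_arcModeDensity (n : ℤ) : ContDiff ℝ (⊤ : ℕ∞) (arcModeDensity a n) :=
  (ha.contDiff_ofReal.inv ha.ofReal_ne_zero).mul (ha.contDiff_arcMode n)

lemma periodic_arcModeDensity (n : ℤ) : Function.Periodic (arcModeDensity a n) (2 * π) :=
  fun θ => by rw [arcModeDensity, ha.periodic, ha.periodic_arcMode, arcModeDensity]

lemma hasDerivAt_arcMode (n : ℤ) (θ : ℝ) :
    HasDerivAt (arcMode a n) (Complex.I * n * arcModeDensity a n θ) θ := by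
  have h := (hasDerivAt_expMode n _).scomp θ (ha.hasDerivAt_arcLength θ)
  rw [Complex.real_smul, Complex.ofReal_inv, mul_left_comm] at h
  exact h

lemma intCast_mul_fCoef_arcMode (n k : ℤ) :
    k * fCoef (arcMode a n) k = n * fCoef (arcModeDensity a n) k := by
  have h := fCoef_of_hasDerivAt (ha.hasDerivAt_arcMode n)
    (continuous_const.mul (ha.contDiff_arcModeDensity n).continuous) (ha.periodic_arcMode n) k
  rw [fCoef_const_mul, mul_assoc, mul_assoc] at h
  exact (mul_left_cancel₀ Complex.I_ne_zero h).symm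

/-- The Fourier coefficients of `arcMode a n`. -/
def arcModeSeq (n : ℤ) : rapidSeq :=
  (rapidDecay_fCoef (ha.contDiff_arcMode n) (ha.periodic_arcMode n)).toSeq

/-- The Fourier coefficients of `arcModeDensity a n`. -/
def arcModeDensitySeq (n : ℤ) : rapidSeq :=
  (rapidDecay_fCoef (ha.contDiff_arcModeDensity n) (ha.periodic_arcModeDensity n)).toSeq

lemma rapidDecay_fCoef_ofReal : RapidDecay (fCoef fun θ => (a θ : ℂ)) :=
  rapidDecay_fCoef ha.contDiff_ofReal ha.periodic_ofReal

theorem position_arcModeSeq (n : ℤ) :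
    position (ha.arcModeSeq n) = (n : ℂ) • ha.arcModeDensitySeq n :=
  DFunLike.ext _ _ fun k => by
    rw [position, diagonal_apply, Complex.ofReal_intCast]
    exact ha.intCast_mul_fCoef_arcMode n k

theorem toeplitz_arcModeDensitySeq (n : ℤ) :
    toeplitz ha.rapidDecay_fCoef_ofReal (ha.arcModeDensitySeq n) = ha.arcModeSeq n :=
  DFunLike.ext _ _ fun k => by
    have h := hasSum_fCoef_mul ha.contDiff_ofReal.continuous
      (ha.contDiff_arcModeDensity n).continuous ha.periodic_ofReal (ha.periodic_arcModeDensity n) k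
    simp only [arcModeDensity, mul_inv_cancel_left₀ (ha.ofReal_ne_zero _)] at h
    exact h.tsum_eq

theorem inner_arcModeSeq_arcModeDensitySeq (n : ℤ) :
    inner ℂ (ha.arcModeSeq n) (ha.arcModeDensitySeq n) = 1 := by
  have h := parseval (ha.contDiff_arcMode n).continuous (ha.contDiff_arcModeDensity n).continuous
    (ha.periodic_arcMode n) (ha.periodic_arcModeDensity n)
  have value : (mean fun θ => conj (arcMode a n θ) * arcModeDensity a n θ) = 1 := by
    simp only [arcModeDensity, mul_left_comm (conj _), arcMode, conj_expMode_mul_expMode]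
    exact (ha.mean_comp_arcLength continuous_const).trans (mean_const 1)
  rw [rapidSeq.inner_eq_tsum, ← value]
  exact h.tsum_eq

theorem toeplitzDecomposition_arcModeSeq :
    ToeplitzDecomposition (fCoef fun θ => (a θ : ℂ)) ha.arcModeSeq := fun p q => by
  have cancel := fun θ => inv_mul_cancel_left₀ (ha.ofReal_ne_zero θ)
  have coef : ∀ p n, (mean fun θ => (a θ : ℂ)⁻¹ * (a θ * expMode p θ * arcMode a (-n) θ)) =
      conj (fCoef (arcMode a n) p) := fun p n => by
    simp only [mul_assoc, cancel, fCoef_eq_mean, conj_mean, map_mul, arcMode, conj_expMode,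
      neg_neg, mul_comm (expMode p _)]
  have value : (mean fun θ => (a θ : ℂ)⁻¹ * (conj (a θ * expMode p θ) * (a θ * expMode q θ))) =
      fCoef (fun θ => (a θ : ℂ)) (p - q) := by
    simp only [map_mul, Complex.conj_ofReal, mul_assoc, cancel, conj_expMode, fCoef_eq_mean,
      mul_left_comm (expMode (-p) _), ← expMode_add]
    ring_nf
  have continuous := fun p => ha.contDiff_ofReal.continuous.mul (continuous_expMode p)
  have periodic := fun p => ha.periodic_ofReal.mul (periodic_expMode p)
  have h := ha.hasSum_mean_mul_arcMode (continuous p) (continuous q) (periodic p) (periodic q)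
  simp only [Pi.mul_apply, coef, Complex.conj_conj, value] at h
  exact h

end IsCircleSpeed

end ArcLength

/-- **Monotonicity of zeta-invariants (from inequality (2.24) of the paper).** For `a`
smooth, `2π`-periodic, positive and normalized by `∫₀^{2π} a⁻¹ = 2π`, the zeta-invariants
satisfy `Z_{k+1}(a) ≥ Z_k(a)` for all `k ≥ 1`. -/
theorem zetaInv_monotone
    (a : ℝ → ℝ) (ha : ContDiff ℝ (⊤ : ℕ∞) a) (haper : Function.Periodic a (2 * Real.pi))
    (hapos : ∀ θ, 0 < a θ)
    (hnorm : (∫ θ in (0:ℝ)..(2 * Real.pi), (a θ)⁻¹) = 2 * Real.pi) :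
    ∀ k : ℕ, 1 ≤ k → (ZetaInv k a).re ≤ (ZetaInv (k + 1) a).re := by
  intro k hk
  obtain ⟨m, rfl⟩ := Nat.exists_eq_add_of_le' hk
  have speed : IsCircleSpeed a := ⟨ha, haper, hapos, hnorm⟩
  exact zetaSum_re_le_zetaSum_add_two_re speed.toeplitzDecomposition_arcModeSeq
    speed.toeplitz_arcModeDensitySeq speed.position_arcModeSeq
    speed.inner_arcModeSeq_arcModeDensitySeq (even_two_mul (m + 1))
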